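/- arXiv:math/0502551 — 2 statements merged into one kernel-verified Lean document; each statement's English description precedes it below -/
import Mathlib

section
/- Let Σ ⊂ ℝ³ be a compact embedded minimal surface, y ∈ ℝ³, h > 0, with ∂Σ ⊂ ∂B_h(y), B_{3h/4}(y) ∩ Σ ≠ ∅, and Σ ⊂ B_h(y) ∩ {x : |x₃ − y₃| ≤ 2β_A h}, where β_A > 0 is a constant chosen so that the slab minus B_{h/8}(y) lies in the solid cone N_{θ₀}(y) and the leaf {f_y = 3h/16} intersected with the slab lies in B_{7h/32}(y). Then B_{h/4}(y) ∩ Σ ≠ ∅. -/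
open Real Set Pointwise Metric

noncomputable section

abbrev R3 := EuclideanSpace ℝ (Fin 3)
abbrev R2 := EuclideanSpace ℝ (Fin 2)

/-- The point `(a, b, c) ∈ ℝ³`. -/
def toR3 (a b c : ℝ) : R3 := (WithLp.equiv 2 (Fin 3 → ℝ)).symm ![a, b, c]

/-- Vertical projection `Π : ℝ³ → ℝ²`. -/
def pr (x : R3) : R2 := (WithLp.equiv 2 (Fin 2 → ℝ)).symm ![x 0, x 1]

/-- The `i`-th coordinate direction of `ℝ²`. -/
def e2 (i : Fin 2) : R2 := EuclideanSpace.single i 1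

/-- `u` satisfies the minimal surface equation
`(1 + u_y²) u_xx − 2 u_x u_y u_xy + (1 + u_x²) u_yy = 0` on `Ω`, and is `C²` there. -/
def SatisfiesMSE (u : R2 → ℝ) (Ω : Set R2) : Prop :=
  ∀ p ∈ Ω, ContDiffAt ℝ 2 u p ∧
    (1 + fderiv ℝ u p (e2 1) ^ 2) * fderiv ℝ (fun q => fderiv ℝ u q (e2 0)) p (e2 0)
      - 2 * fderiv ℝ u p (e2 0) * fderiv ℝ u p (e2 1) *
          fderiv ℝ (fun q => fderiv ℝ u q (e2 0)) p (e2 1)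
      + (1 + fderiv ℝ u p (e2 0) ^ 2) *
          fderiv ℝ (fun q => fderiv ℝ u q (e2 1)) p (e2 1) = 0

/-- `S` is a minimal surface with boundary `bd`: near every non-boundary point, after a
rigid rotation, `S` coincides with the graph of a solution of the minimal surface
equation. -/
def IsMinimalSurface (S bd : Set R3) : Prop :=
  bd ⊆ S ∧ ∀ z ∈ S \ bd, ∃ (Q : R3 ≃ₗᵢ[ℝ] R3) (ε : ℝ) (u : R2 → ℝ), 0 < ε ∧
    SatisfiesMSE u (ball (pr (Q z)) ε) ∧
    (Q '' S) ∩ {x : R3 | dist (pr x) (pr (Q z)) < ε ∧ |x 2 - (Q z) 2| < ε} =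
      {x : R3 | pr x ∈ ball (pr (Q z)) ε ∧ x = toR3 (x 0) (x 1) (u (pr x)) ∧
        |x 2 - (Q z) 2| < ε}

/-- `S` is graphical at `z`: near `z` it lies on the graph of a differentiable function
of `(x₁, x₂)`; equivalently the tangent plane at `z` is not vertical. -/
def GraphicalAt (S : Set R3) (z : R3) : Prop :=
  ∃ ε > 0, ∃ u : R2 → ℝ, DifferentiableOn ℝ u (ball (pr z) ε) ∧
    ∀ x ∈ S ∩ ball z ε, x 2 = u (pr x)

/-- The unique positive solution `t₀` of `cosh t = t · sinh t`. -/
def tcrit : ℝ := sInf {t | 0 < t ∧ Real.cosh t ≤ t * Real.sinh t}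

/-- `sin² θ₀` for the critical catenoid cone angle `θ₀`. -/
def sinSqθ₀ : ℝ := tcrit ^ 2 / (tcrit ^ 2 + Real.cosh tcrit ^ 2)

/-- The middle portion of the unit vertical catenoid centered at `y`. -/
def Cat0At (y : R3) : Set R3 :=
  {x | Real.cosh (x 2 - y 2) ^ 2 = (x 0 - y 0) ^ 2 + (x 1 - y 1) ^ 2 ∧
    |x 2 - y 2| < tcrit}

/-- The open solid double cone `N_{θ₀}(y)` of critical angle centered at `y`. -/
def Ncone (y : R3) : Set R3 := {x | x ≠ y ∧ (x 2 - y 2) ^ 2 < dist x y ^ 2 * sinSqθ₀}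

/-- The catenoid-foliation function `f_y` centered at `y`: `y + (x−y)/f_y(x) ∈ Cat₀(y)`. -/
def fCat (y x : R3) : ℝ := sInf {l | 0 < l ∧ y + l⁻¹ • (x - y) ∈ Cat0At y}

/-- The open tubular neighborhood of radius `r` of a set. -/
def Tub (r : ℝ) {α : Type*} [PseudoEMetricSpace α] (s : Set α) : Set α :=
  Metric.thickening r s

/-!
If a `C²` function `F`, restricted to a minimal surface, has an interior local minimum at `z`, then
`∇F` is normal to the surface at `z`, and since the mean curvature vanishes the trace of `D²F` over
the tangent plane is nonnegative. Up to the factor `‖∇F‖²` this trace is `‖∇F‖² ΔF - D²F(∇F, ∇F)`,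
whose sign gives a maximum principle for any `F` whose level sets are strictly curved to one side.

Instead of the catenoid foliation we use `F = log r² - k (x₂ - y₂)²`, with `r` the distance to the
vertical axis through `y`; for it the quantity above has the sign of `1 - k r²`. If `k r² > 1` along
a compact minimal surface, then `F` attains its minimum on the boundary. In a thin slab, with `k` of
order `h⁻²`, `F` is close to `log |x - y|²`, so a surface that avoids `B_{h/4}(y)` and has its
boundary at distance at least `h` from `y` cannot meet `B_{3h/4}(y)`. The cone `N_{θ₀}(y)` misses
the vertical axis, which bounds the half-width of the slab by `h / 8`.
-/

open Filter Topology
open scoped Gradient Laplacian InnerProductSpace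

section SecondOrder

variable {E : Type*} [NormedAddCommGroup E] [NormedSpace ℝ E]
  {F : E → ℝ} {γ γ' : ℝ → E} {a : E} {t₀ : ℝ}

theorem second_deriv_nonneg_of_isLocalMin {g g' : ℝ → ℝ} {g'' : ℝ} (hmin : IsLocalMin g t₀)
    (hg : ∀ᶠ t in 𝓝 t₀, HasDerivAt g (g' t) t) (hg' : HasDerivAt g' g'' t₀) : 0 ≤ g'' := by
  have hderiv : deriv g =ᶠ[𝓝 t₀] g' := hg.mono fun t ht ↦ ht.deriv
  have hderiv2 : deriv (deriv g) t₀ = g'' := by rw [hderiv.deriv_eq, hg'.deriv]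
  by_contra! hneg
  have hmax : IsLocalMax g t₀ :=
    isLocalMax_of_deriv_deriv_neg (hderiv2.trans_lt hneg) hmin.deriv_eq_zero
      hg.self_of_nhds.continuousAt
  have hconst : g =ᶠ[𝓝 t₀] fun _ ↦ g t₀ := by
    filter_upwards [hmin, hmax] with t hle hge using le_antisymm hge hle
  have hzero : deriv (deriv g) t₀ = 0 := by
    rw [hconst.deriv.deriv_eq, deriv_const', deriv_const]
  linarith

theorem eventually_hasDerivAt_comp_curve (hF : ContDiffAt ℝ 1 F (γ t₀))
    (hγ : ∀ᶠ t in 𝓝 t₀, HasDerivAt γ (γ' t) t) :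
    ∀ᶠ t in 𝓝 t₀, HasDerivAt (F ∘ γ) (fderiv ℝ F (γ t) (γ' t)) t := by
  have hFγ : ∀ᶠ t in 𝓝 t₀, ContDiffAt ℝ 1 F (γ t) :=
    hγ.self_of_nhds.continuousAt.eventually (hF.eventually (by simp))
  filter_upwards [hγ, hFγ] with t hγt hFt
  exact (hFt.differentiableAt one_ne_zero).hasFDerivAt.comp_hasDerivAt t hγt

theorem hasDerivAt_fderiv_comp_curve (hF : ContDiffAt ℝ 2 F (γ t₀))
    (hγ : HasDerivAt γ (γ' t₀) t₀) (hγ' : HasDerivAt γ' a t₀) :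
    HasDerivAt (fun t ↦ fderiv ℝ F (γ t) (γ' t))
      (fderiv ℝ (fderiv ℝ F) (γ t₀) (γ' t₀) (γ' t₀) + fderiv ℝ F (γ t₀) a) t₀ :=
  have hF' : DifferentiableAt ℝ (fderiv ℝ F) (γ t₀) :=
    (hF.fderiv_right (m := 1) (by norm_num)).differentiableAt one_ne_zero
  (hF'.hasFDerivAt.comp_hasDerivAt t₀ hγ).clm_apply hγ'

theorem fderiv_curve_eq_zero_of_isLocalMin (hF : DifferentiableAt ℝ F (γ t₀))
    (hγ : HasDerivAt γ a t₀) (hmin : IsLocalMin (F ∘ γ) t₀) : fderiv ℝ F (γ t₀) a = 0 :=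
  hmin.hasDerivAt_eq_zero (hF.hasFDerivAt.comp_hasDerivAt t₀ hγ)

theorem hessian_curve_nonneg_of_isLocalMin (hF : ContDiffAt ℝ 2 F (γ t₀))
    (hγ : ∀ᶠ t in 𝓝 t₀, HasDerivAt γ (γ' t) t) (hγ' : HasDerivAt γ' a t₀)
    (hmin : IsLocalMin (F ∘ γ) t₀) :
    0 ≤ fderiv ℝ (fderiv ℝ F) (γ t₀) (γ' t₀) (γ' t₀) + fderiv ℝ F (γ t₀) a :=
  second_deriv_nonneg_of_isLocalMin hmin
    (eventually_hasDerivAt_comp_curve (hF.of_le one_le_two) hγ)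
    (hasDerivAt_fderiv_comp_curve hF hγ.self_of_nhds hγ')

theorem hasDerivAt_line (p v : E) (t : ℝ) :
    HasDerivAt (fun t : ℝ ↦ p + t • v) v t := by
  simpa using ((hasDerivAt_id t).smul_const v).const_add p

theorem tendsto_line (p v : E) :
    Tendsto (fun t : ℝ ↦ p + t • v) (𝓝 0) (𝓝 p) := by
  simpa using (hasDerivAt_line p v 0).continuousAt.tendsto

end SecondOrder

section LevelSetCurvature

variable {E : Type*} [NormedAddCommGroup E] [InnerProductSpace ℝ E]

theorem laplacian_eq_sum_fderiv_fderiv [FiniteDimensional ℝ E] {ι : Type*} [Fintype ι]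
    (b : OrthonormalBasis ι ℝ E) (F : E → ℝ) (x : E) :
    Δ F x = ∑ i, fderiv ℝ (fderiv ℝ F) x (b i) (b i) := by
  simp [InnerProductSpace.laplacian_eq_iteratedFDeriv_orthonormalBasis F b,
    iteratedFDeriv_two_apply]

/-- The quantity `‖∇F‖² ΔF - D²F(∇F, ∇F) = ‖∇F‖³ div (∇F / ‖∇F‖)`. Where `∇F ≠ 0` its sign is
that of the mean curvature of the level set of `F`; it vanishes identically for a function, such
as `fCat y`, whose level sets are minimal. -/
def levelSetCurvature [FiniteDimensional ℝ E] (F : E → ℝ) (x : E) : ℝ :=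
  ‖∇ F x‖ ^ 2 * Δ F x - fderiv ℝ (fderiv ℝ F) x (∇ F x) (∇ F x)

theorem levelSetCurvature_of_gradient_eq_smul [FiniteDimensional ℝ E] {F : E → ℝ} {x N : E}
    {c : ℝ} (h : ∇ F x = c • N) :
    levelSetCurvature F x = c ^ 2 * (‖N‖ ^ 2 * Δ F x - fderiv ℝ (fderiv ℝ F) x N N) := by
  rw [levelSetCurvature, h]
  simp only [norm_smul, map_smul, smul_apply, smul_eq_mul, mul_pow, norm_eq_abs, sq_abs]
  ring

/-- The point over `q` of the graph of `u : ℝ² → ℝ`, in the coordinates of the orthonormal frame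
`b`. Applied to `fderiv ℝ u q` in place of `u` it gives the tangent vectors of that graph. -/
def frameGraph (b : OrthonormalBasis (Fin 3) ℝ E) (u : R2 → ℝ) (q : R2) : E :=
  q 0 • b 0 + q 1 • b 1 + u q • b 2

/-- The upward normal, in the coordinates of the orthonormal frame `b`, of a graph whose height
has differential `ℓ`. It is not normalized. -/
def frameNormal (b : OrthonormalBasis (Fin 3) ℝ E) (ℓ : R2 →L[ℝ] ℝ) : E :=
  b 2 - ℓ (e2 0) • b 0 - ℓ (e2 1) • b 1

/-- The gradient of `ℓ` turned by a right angle: it spans the kernel of `ℓ` when `ℓ ≠ 0`. -/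
def kerDirection (ℓ : R2 →L[ℝ] ℝ) : R2 := ℓ (e2 1) • e2 0 - ℓ (e2 0) • e2 1

variable {b : OrthonormalBasis (Fin 3) ℝ E} {u : R2 → ℝ} {p : R2} {F : E → ℝ}

theorem continuousAt_frameGraph (hu : ContinuousAt u p) : ContinuousAt (frameGraph b u) p := by
  unfold frameGraph
  fun_prop

theorem hasDerivAt_frameGraph_line {v : R2} {t : ℝ} (hu : DifferentiableAt ℝ u (p + t • v)) :
    HasDerivAt (fun t : ℝ ↦ frameGraph b u (p + t • v))
      (frameGraph b (fderiv ℝ u (p + t • v)) v) t := by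
  have hcoord (i : Fin 2) : HasDerivAt (fun t : ℝ ↦ (p + t • v) i) (v i) t := by
    simpa using hasDerivAt_line (p i) (v i) t
  have hheight : HasDerivAt (fun t : ℝ ↦ u (p + t • v)) (fderiv ℝ u (p + t • v) v) t :=
    hu.hasFDerivAt.comp_hasDerivAt t (hasDerivAt_line p v t)
  exact (((hcoord 0).smul_const (b 0)).add ((hcoord 1).smul_const (b 1))).add
    (hheight.smul_const (b 2))

theorem hasDerivAt_frameGraph_fderiv_line (hu : ContDiffAt ℝ 2 u p) (v : R2) :
    HasDerivAt (fun t : ℝ ↦ frameGraph b (fderiv ℝ u (p + t • v)) v)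
      (fderiv ℝ (fderiv ℝ u) p v v • b 2) 0 := by
  have hslope : HasDerivAt (fun t : ℝ ↦ fderiv ℝ u (p + t • v) v)
      (fderiv ℝ (fderiv ℝ u) p v v) 0 := by
    simpa using hasDerivAt_fderiv_comp_curve (γ := fun t : ℝ ↦ p + t • v) (γ' := fun _ ↦ v)
      (by simpa using hu) (hasDerivAt_line p v 0) (hasDerivAt_const 0 v)
  exact (hslope.smul_const (b 2)).const_add _

theorem isLocalMin_comp_frameGraph_line (hmin : IsLocalMin (F ∘ frameGraph b u) p) (v : R2) :
    IsLocalMin (F ∘ fun t : ℝ ↦ frameGraph b u (p + t • v)) 0 := by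
  simpa [IsLocalMin, IsMinFilter] using (tendsto_line p v).eventually hmin

theorem fderiv_tangent_eq_zero_of_isLocalMin (hu : DifferentiableAt ℝ u p)
    (hF : DifferentiableAt ℝ F (frameGraph b u p)) (hmin : IsLocalMin (F ∘ frameGraph b u) p)
    (v : R2) : fderiv ℝ F (frameGraph b u p) (frameGraph b (fderiv ℝ u p) v) = 0 := by
  simpa using fderiv_curve_eq_zero_of_isLocalMin (t₀ := 0)
    (γ := fun t : ℝ ↦ frameGraph b u (p + t • v)) (by simpa using hF)
    (hasDerivAt_frameGraph_line (by simpa using hu)) (isLocalMin_comp_frameGraph_line hmin v)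

theorem hessian_tangent_nonneg_of_isLocalMin (hu : ContDiffAt ℝ 2 u p)
    (hF : ContDiffAt ℝ 2 F (frameGraph b u p)) (hmin : IsLocalMin (F ∘ frameGraph b u) p)
    (v : R2) :
    0 ≤ fderiv ℝ (fderiv ℝ F) (frameGraph b u p)
        (frameGraph b (fderiv ℝ u p) v) (frameGraph b (fderiv ℝ u p) v)
      + fderiv ℝ (fderiv ℝ u) p v v * fderiv ℝ F (frameGraph b u p) (b 2) := by
  have hdiff : ∀ᶠ t : ℝ in 𝓝 0, DifferentiableAt ℝ u (p + t • v) :=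
    (tendsto_line p v).eventually
      ((hu.eventually (by simp)).mono fun q hq ↦ hq.differentiableAt two_ne_zero)
  simpa using hessian_curve_nonneg_of_isLocalMin (t₀ := 0)
    (γ := fun t : ℝ ↦ frameGraph b u (p + t • v)) (by simpa using hF)
    (hdiff.mono fun t ht ↦ hasDerivAt_frameGraph_line ht)
    (hasDerivAt_frameGraph_fderiv_line hu v) (isLocalMin_comp_frameGraph_line hmin v)

theorem SatisfiesMSE.sum_hessian_eq_zero (hu : SatisfiesMSE u {p}) :
    fderiv ℝ (fderiv ℝ u) p (e2 0) (e2 0) + fderiv ℝ (fderiv ℝ u) p (e2 1) (e2 1)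
      + fderiv ℝ (fderiv ℝ u) p (kerDirection (fderiv ℝ u p)) (kerDirection (fderiv ℝ u p))
      = 0 := by
  obtain ⟨hu2, hmse⟩ := hu p rfl
  have hdiff : DifferentiableAt ℝ (fderiv ℝ u) p :=
    (hu2.fderiv_right (m := 1) (by norm_num)).differentiableAt one_ne_zero
  have hpartial (v w : R2) :
      fderiv ℝ (fun q ↦ fderiv ℝ u q v) p w = fderiv ℝ (fderiv ℝ u) p w v := by
    simp [fderiv_clm_apply hdiff (differentiableAt_const v)]
  have hsymm : fderiv ℝ (fderiv ℝ u) p (e2 0) (e2 1) = fderiv ℝ (fderiv ℝ u) p (e2 1) (e2 0) :=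
    (hu2.isSymmSndFDerivAt (by simp)) (e2 0) (e2 1)
  simp only [hpartial] at hmse
  simp only [kerDirection, map_sub, map_smul, sub_apply, smul_apply, smul_eq_mul, hsymm]
  linear_combination hmse

theorem norm_frameNormal_sq (ℓ : R2 →L[ℝ] ℝ) :
    ‖frameNormal b ℓ‖ ^ 2 = 1 + ℓ (e2 0) ^ 2 + ℓ (e2 1) ^ 2 := by
  rw [← b.sum_sq_norm_inner_right]
  simp only [frameNormal, inner_sub_right, b.inner_eq_ite, inner_smul_right, mul_ite, mul_one,
    mul_zero, norm_eq_abs, sq_abs, Fin.sum_univ_three, Fin.reduceEq, ↓reduceIte, zero_sub,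
    zero_ne_one, sub_zero, even_two, Even.neg_pow, one_ne_zero, sub_self, one_pow]
  ring

-- With `T₀, T₁, T₂` the three tangent vectors on the left and `N` the normal, this is the
-- identity `∑ Tₖ ⊗ Tₖ = ‖N‖² I - N ⊗ N`, which spares us an orthonormal frame of the tangent plane.
theorem sum_apply_tangent_eq (B : E →L[ℝ] E →L[ℝ] ℝ) (ℓ : R2 →L[ℝ] ℝ) :
    let T := frameGraph b ℓ
    B (T (e2 0)) (T (e2 0)) + B (T (e2 1)) (T (e2 1))
        + B (T (kerDirection ℓ)) (T (kerDirection ℓ))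
      = ‖frameNormal b ℓ‖ ^ 2 * ∑ i, B (b i) (b i) - B (frameNormal b ℓ) (frameNormal b ℓ) := by
  intro T
  rw [norm_frameNormal_sq]
  simp only [e2, frameGraph, PiLp.single_eq_same, one_smul, ne_eq, one_ne_zero, not_false_eq_true,
    PiLp.single_eq_of_ne, zero_smul, add_zero, map_add, map_smul, add_apply, smul_eq_mul,
    smul_apply, zero_ne_one, zero_add, kerDirection, PiLp.sub_apply, PiLp.smul_apply, mul_one,
    mul_zero, sub_zero, zero_sub, neg_smul, map_sub, map_neg, neg_apply, Fin.sum_univ_three,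
    frameNormal, sub_apply, T]
  ring

theorem gradient_eq_smul_frameNormal_of_isLocalMin [CompleteSpace E]
    (hu : DifferentiableAt ℝ u p) (hF : DifferentiableAt ℝ F (frameGraph b u p))
    (hmin : IsLocalMin (F ∘ frameGraph b u) p) :
    ∇ F (frameGraph b u p) =
      fderiv ℝ F (frameGraph b u p) (b 2) • frameNormal b (fderiv ℝ u p) := by
  have htangent (i : Fin 2) := fderiv_tangent_eq_zero_of_isLocalMin hu hF hmin (e2 i)
  have h0 : fderiv ℝ F (frameGraph b u p) (b 0) =
      -(fderiv ℝ u p (e2 0) * fderiv ℝ F (frameGraph b u p) (b 2)) :=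
    eq_neg_of_add_eq_zero_left (by simpa [frameGraph, e2] using htangent 0)
  have h1 : fderiv ℝ F (frameGraph b u p) (b 1) =
      -(fderiv ℝ u p (e2 1) * fderiv ℝ F (frameGraph b u p) (b 2)) :=
    eq_neg_of_add_eq_zero_left (by simpa [frameGraph, e2] using htangent 1)
  rw [← b.sum_repr' (∇ F (frameGraph b u p))]
  simp only [Fin.sum_univ_three, inner_gradient_right, RCLike.conj_to_real, h0, h1, frameNormal]
  module

theorem levelSetCurvature_nonneg_of_isLocalMin_frameGraph [FiniteDimensional ℝ E]
    (hu : SatisfiesMSE u {p}) (hF : ContDiffAt ℝ 2 F (frameGraph b u p))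
    (hmin : IsLocalMin (F ∘ frameGraph b u) p) :
    0 ≤ levelSetCurvature F (frameGraph b u p) := by
  have hu2 : ContDiffAt ℝ 2 u p := (hu p rfl).1
  have hgrad := gradient_eq_smul_frameNormal_of_isLocalMin (hu2.differentiableAt two_ne_zero)
    (hF.differentiableAt two_ne_zero) hmin
  have hhess := hessian_tangent_nonneg_of_isLocalMin hu2 hF hmin
  rw [levelSetCurvature_of_gradient_eq_smul hgrad, laplacian_eq_sum_fderiv_fderiv b,
    ← sum_apply_tangent_eq]
  refine mul_nonneg (sq_nonneg _) ?_
  linear_combination hhess (e2 0) + hhess (e2 1) + hhess (kerDirection (fderiv ℝ u p))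
    + fderiv ℝ F (frameGraph b u p) (b 2) * hu.sum_hessian_eq_zero

end LevelSetCurvature

section Comparison

variable {S bd : Set R3} {F : R3 → ℝ} {z : R3}

theorem frameGraph_map_symm (Q : R3 ≃ₗᵢ[ℝ] R3) (u : R2 → ℝ) (q : R2) :
    frameGraph ((EuclideanSpace.basisFun (Fin 3) ℝ).map Q.symm) u q =
      Q.symm (toR3 (q 0) (q 1) (u q)) := by
  have htoR3 : toR3 (q 0) (q 1) (u q) = frameGraph (EuclideanSpace.basisFun (Fin 3) ℝ) u q := by
    ext i
    fin_cases i <;> simp [toR3, frameGraph]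
  rw [htoR3]
  simp [frameGraph]

theorem IsMinimalSurface.exists_frameGraph (hS : IsMinimalSurface S bd) (hz : z ∈ S \ bd) :
    ∃ (b : OrthonormalBasis (Fin 3) ℝ R3) (u : R2 → ℝ) (p : R2), SatisfiesMSE u {p} ∧
      frameGraph b u p = z ∧ ∀ᶠ q in 𝓝 p, frameGraph b u q ∈ S := by
  obtain ⟨Q, ε, u, hε, hu, hgraph⟩ := hS.2 z hz
  have hcenter : Q z = toR3 (pr (Q z) 0) (pr (Q z) 1) (u (pr (Q z))) :=
    (hgraph.subset ⟨mem_image_of_mem Q hz.1, by simpa using hε⟩).2.1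
  have hheight : Q z 2 = u (pr (Q z)) := congrArg (fun x : R3 ↦ x 2) hcenter
  have hp : pr (Q z) ∈ ball (pr (Q z)) ε := mem_ball_self hε
  refine ⟨(EuclideanSpace.basisFun (Fin 3) ℝ).map Q.symm, u, pr (Q z),
    fun q hq ↦ hu q (hq ▸ hp), ?_, ?_⟩
  · rw [frameGraph_map_symm, ← hcenter, Q.symm_apply_apply]
  · have hclose : ∀ᶠ q in 𝓝 (pr (Q z)), |u q - u (pr (Q z))| < ε :=
      (hu _ hp).1.continuousAt.eventually (ball_mem_nhds _ hε)
    filter_upwards [ball_mem_nhds _ hε, hclose] with q hq hqu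
    have hpr : pr (toR3 (q 0) (q 1) (u q)) = q := by
      ext i
      fin_cases i <;> rfl
    have hmem : toR3 (q 0) (q 1) (u q) ∈ Q '' S :=
      (hgraph.symm.subset ⟨by rwa [hpr], by rw [hpr]; rfl, by rw [hheight]; exact hqu⟩).1
    obtain ⟨x, hxS, hx⟩ := hmem
    rwa [frameGraph_map_symm, ← hx, Q.symm_apply_apply]

theorem IsMinimalSurface.levelSetCurvature_nonneg (hS : IsMinimalSurface S bd) (hz : z ∈ S \ bd)
    (hF : ContDiffAt ℝ 2 F z) (hmin : IsLocalMinOn F S z) : 0 ≤ levelSetCurvature F z := by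
  obtain ⟨b, u, p, hu, rfl, hgraph⟩ := hS.exists_frameGraph hz
  have htendsto : Tendsto (frameGraph b u) (𝓝 p) (𝓝[S] frameGraph b u p) :=
    tendsto_nhdsWithin_of_tendsto_nhds_of_eventually_within _
      (continuousAt_frameGraph (hu p rfl).1.continuousAt) hgraph
  exact levelSetCurvature_nonneg_of_isLocalMin_frameGraph hu hF (htendsto.eventually hmin)

theorem IsMinimalSurface.exists_mem_bd_le (hS : IsMinimalSurface S bd) (hcpt : IsCompact S)
    (hcont : ContinuousOn F S) (hF : ∀ z ∈ S \ bd, ContDiffAt ℝ 2 F z)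
    (hneg : ∀ z ∈ S \ bd, levelSetCurvature F z < 0) {x : R3} (hx : x ∈ S) :
    ∃ w ∈ bd, F w ≤ F x := by
  obtain ⟨w, hw, hmin⟩ := hcpt.exists_isMinOn ⟨x, hx⟩ hcont
  refine ⟨w, ?_, hmin hx⟩
  by_contra hwbd
  exact (hneg w ⟨hw, hwbd⟩).not_ge
    (hS.levelSetCurvature_nonneg ⟨hw, hwbd⟩ (hF w ⟨hw, hwbd⟩) hmin.localize)

end Comparison

section Barrier

variable {x y : R3} {k : ℝ}

/-- The squared distance from `x` to the vertical axis through `y`. -/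
def axisDistSq (y x : R3) : ℝ := (x 0 - y 0) ^ 2 + (x 1 - y 1) ^ 2

/-- The barrier `log r² - k (x₂ - y₂)²`, with `r` the distance to the vertical axis through `y`.
It plays the part of the catenoid function `fCat y`: its restriction to a minimal surface has no
local minimum where `k r² > 1`. -/
def logBarrier (y : R3) (k : ℝ) (x : R3) : ℝ := log (axisDistSq y x) - k * (x 2 - y 2) ^ 2

theorem dist_sq_eq_axisDistSq_add (x y : R3) : dist x y ^ 2 = axisDistSq y x + (x 2 - y 2) ^ 2 := by
  simp [EuclideanSpace.dist_sq_eq, Fin.sum_univ_three, Real.dist_eq, axisDistSq]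

theorem contDiff_axisDistSq : ContDiff ℝ 2 (axisDistSq y) := by
  unfold axisDistSq
  fun_prop

theorem contDiffAt_logBarrier (hx : axisDistSq y x ≠ 0) : ContDiffAt ℝ 2 (logBarrier y k) x :=
  (contDiff_axisDistSq.contDiffAt.log hx).sub (by fun_prop)

theorem hasLineDerivAt_coord_sub (x v y : R3) (i : Fin 3) :
    HasLineDerivAt ℝ (fun x : R3 ↦ x i - y i) (v i) x v :=
  (hasDerivAt_line (x i) (v i) 0).sub_const (y i)

theorem hasLineDerivAt_axisDistSq (x v : R3) :
    HasLineDerivAt ℝ (axisDistSq y) (2 * ((x 0 - y 0) * v 0 + (x 1 - y 1) * v 1)) x v := by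
  have h (i : Fin 3) : HasDerivAt (fun t : ℝ ↦ (x + t • v) i - y i) (v i) 0 :=
    hasLineDerivAt_coord_sub x v y i
  refine (((h 0).pow 2).add ((h 1).pow 2)).congr_deriv ?_
  simp only [Nat.cast_ofNat, zero_smul, add_zero, Nat.add_one_sub_one, pow_one]
  ring

theorem fderiv_logBarrier (hx : axisDistSq y x ≠ 0) (v : R3) :
    fderiv ℝ (logBarrier y k) x v =
      2 * ((x 0 - y 0) * v 0 + (x 1 - y 1) * v 1) / axisDistSq y x
        - 2 * k * ((x 2 - y 2) * v 2) := by
  have hr : HasDerivAt (fun t : ℝ ↦ axisDistSq y (x + t • v)) _ 0 := hasLineDerivAt_axisDistSq x v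
  have hz : HasDerivAt (fun t : ℝ ↦ (x + t • v) 2 - y 2) (v 2) 0 := hasLineDerivAt_coord_sub x v y 2
  have hline : HasLineDerivAt ℝ (logBarrier y k) _ x v :=
    (hr.log (by simpa using hx)).sub ((hz.pow 2).const_mul k)
  rw [← ((contDiffAt_logBarrier hx).differentiableAt two_ne_zero).lineDeriv_eq_fderiv,
    hline.lineDeriv]
  simp only [zero_smul, add_zero, Nat.cast_ofNat, Nat.add_one_sub_one, pow_one, sub_right_inj]
  ring

theorem fderiv_fderiv_logBarrier (hx : axisDistSq y x ≠ 0) (v : R3) :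
    fderiv ℝ (fderiv ℝ (logBarrier y k)) x v v =
      2 * (v 0 ^ 2 + v 1 ^ 2) / axisDistSq y x
        - 4 * ((x 0 - y 0) * v 0 + (x 1 - y 1) * v 1) ^ 2 / axisDistSq y x ^ 2
        - 2 * k * v 2 ^ 2 := by
  have hdiff : DifferentiableAt ℝ (fderiv ℝ (logBarrier y k)) x :=
    ((contDiffAt_logBarrier hx).fderiv_right (m := 1) (by norm_num)).differentiableAt one_ne_zero
  have hnhds : ∀ᶠ z in 𝓝 x, axisDistSq y z ≠ 0 :=
    contDiff_axisDistSq.continuous.continuousAt.eventually_ne hx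
  have hdv : DifferentiableAt ℝ (fun z ↦ fderiv ℝ (logBarrier y k) z v) x :=
    hdiff.clm_apply (differentiableAt_const v)
  have hr : HasDerivAt (fun t : ℝ ↦ axisDistSq y (x + t • v)) _ 0 := hasLineDerivAt_axisDistSq x v
  have h (i : Fin 3) : HasDerivAt (fun t : ℝ ↦ (x + t • v) i - y i) (v i) 0 :=
    hasLineDerivAt_coord_sub x v y i
  have hline : HasLineDerivAt ℝ (fun z ↦ 2 * ((z 0 - y 0) * v 0 + (z 1 - y 1) * v 1)
      / axisDistSq y z - 2 * k * ((z 2 - y 2) * v 2)) _ x v :=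
    (((((h 0).mul_const (v 0)).add ((h 1).mul_const (v 1))).const_mul 2).div hr
      (by simpa using hx)).sub (((h 2).mul_const (v 2)).const_mul (2 * k))
  have hline' := hline.congr_of_eventuallyEq (hnhds.mono fun z hz ↦ fderiv_logBarrier hz v)
  have happ : fderiv ℝ (fun z ↦ fderiv ℝ (logBarrier y k) z v) x v =
      fderiv ℝ (fderiv ℝ (logBarrier y k)) x v v := by
    simp [fderiv_clm_apply hdiff (differentiableAt_const v)]
  rw [← happ, ← hdv.lineDeriv_eq_fderiv, hline'.lineDeriv]
  simp only [zero_smul, add_zero, PiLp.add_apply, PiLp.smul_apply, smul_eq_mul, Pi.add_apply,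
    zero_mul]
  field_simp
  ring

theorem gradient_logBarrier (hx : axisDistSq y x ≠ 0) :
    ∇ (logBarrier y k) x = toR3 (2 * (x 0 - y 0) / axisDistSq y x)
      (2 * (x 1 - y 1) / axisDistSq y x) (-(2 * k * (x 2 - y 2))) := by
  refine ext_inner_right ℝ fun v ↦ ?_
  rw [inner_gradient_left, fderiv_logBarrier hx]
  simp only [toR3, WithLp.equiv_symm_apply, PiLp.inner_apply, RCLike.inner_apply, ringHom_apply,
    Fin.sum_univ_three, Matrix.cons_val_zero, Matrix.cons_val_one, Matrix.cons_val, mul_neg]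
  ring

theorem laplacian_logBarrier (hx : axisDistSq y x ≠ 0) : Δ (logBarrier y k) x = -2 * k := by
  rw [laplacian_eq_sum_fderiv_fderiv (EuclideanSpace.basisFun (Fin 3) ℝ)]
  simp only [fderiv_fderiv_logBarrier hx, Fin.sum_univ_three, EuclideanSpace.basisFun_apply,
    PiLp.single_eq_same, one_pow, ne_eq, one_ne_zero, not_false_eq_true, PiLp.single_eq_of_ne,
    OfNat.ofNat_ne_zero, zero_pow, add_zero, mul_one, mul_zero, Fin.reduceEq, sub_zero, zero_ne_one,
    zero_add, zero_div, sub_self, zero_sub, neg_mul, add_eq_right]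
  field_simp
  rw [axisDistSq]
  ring

theorem levelSetCurvature_logBarrier (hx : axisDistSq y x ≠ 0) :
    levelSetCurvature (logBarrier y k) x =
      8 * (1 - k * axisDistSq y x) / axisDistSq y x ^ 2 := by
  rw [levelSetCurvature, laplacian_logBarrier hx, fderiv_fderiv_logBarrier hx,
    gradient_logBarrier hx]
  simp only [toR3, WithLp.equiv_symm_apply, EuclideanSpace.norm_sq_eq, norm_eq_abs, sq_abs,
    Fin.sum_univ_three, Matrix.cons_val_zero, Matrix.cons_val_one, Matrix.cons_val, even_two,
    Even.neg_pow, neg_mul, mul_neg]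
  have hr : (x 0 - y 0) ^ 2 = axisDistSq y x - (x 1 - y 1) ^ 2 := by simp [axisDistSq]
  field_simp
  rw [hr]
  ring

end Barrier

section Slab

variable {S bd : Set R3} {x y : R3} {δ ρ σ R k : ℝ}

theorem sub_sq_le_axisDistSq (hdist : ρ ^ 2 ≤ dist x y ^ 2) (hslab : |x 2 - y 2| ≤ δ) :
    ρ ^ 2 - δ ^ 2 ≤ axisDistSq y x := by
  have hheight : (x 2 - y 2) ^ 2 ≤ δ ^ 2 := sq_le_sq.mpr (hslab.trans (le_abs_self δ))
  linarith [dist_sq_eq_axisDistSq_add x y]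

theorem logBarrier_le_log_dist_sq (hk : 0 ≤ k) (hx : 0 < axisDistSq y x) :
    logBarrier y k x ≤ log (dist x y ^ 2) := by
  have hlog : log (axisDistSq y x) ≤ log (dist x y ^ 2) :=
    log_le_log hx (by linarith [dist_sq_eq_axisDistSq_add x y, sq_nonneg (x 2 - y 2)])
  exact (sub_le_self _ (by positivity)).trans hlog

theorem log_sub_le_logBarrier (hk : 0 ≤ k) (hR : 0 < R ^ 2 - δ ^ 2)
    (hdist : R ^ 2 ≤ dist x y ^ 2) (hslab : |x 2 - y 2| ≤ δ) :
    log (R ^ 2 - δ ^ 2) - k * δ ^ 2 ≤ logBarrier y k x := by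
  have hheight : (x 2 - y 2) ^ 2 ≤ δ ^ 2 := sq_le_sq.mpr (hslab.trans (le_abs_self δ))
  exact sub_le_sub (log_le_log hR (sub_sq_le_axisDistSq hdist hslab))
    (mul_le_mul_of_nonneg_left hheight hk)

theorem levelSetCurvature_logBarrier_neg (hk : 0 ≤ k) (hx : 1 < k * axisDistSq y x) :
    levelSetCurvature (logBarrier y k) x < 0 := by
  have hr : 0 < axisDistSq y x := pos_of_mul_pos_right (one_pos.trans hx) hk
  rw [levelSetCurvature_logBarrier hr.ne']
  exact div_neg_of_neg_of_pos (by linarith) (by positivity)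

theorem IsMinimalSurface.ball_inter_nonempty_of_slab (hS : IsMinimalSurface S bd)
    (hcpt : IsCompact S) (hslab : ∀ x ∈ S, |x 2 - y 2| ≤ δ) (hbd : ∀ x ∈ bd, R ≤ dist x y)
    (hnear : (ball y σ ∩ S).Nonempty) (hρ : 0 ≤ ρ) (hR : 0 ≤ R) (hk : 0 ≤ k)
    (hkρ : 1 < k * (ρ ^ 2 - δ ^ 2)) (hσR : σ ^ 2 * exp (k * δ ^ 2) ≤ R ^ 2 - δ ^ 2) :
    (ball y ρ ∩ S).Nonempty := by
  by_contra hempty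
  have hfar : ∀ x ∈ S, 1 < k * axisDistSq y x := fun x hx ↦
    have hdist : ρ ≤ dist x y := not_lt.mp fun hlt ↦ hempty ⟨x, hlt, hx⟩
    hkρ.trans_le (mul_le_mul_of_nonneg_left
      (sub_sq_le_axisDistSq (pow_le_pow_left₀ hρ hdist 2) (hslab x hx)) hk)
  have hpos : ∀ x ∈ S, 0 < axisDistSq y x := fun x hx ↦
    pos_of_mul_pos_right (one_pos.trans (hfar x hx)) hk
  have hsmooth : ∀ x ∈ S, ContDiffAt ℝ 2 (logBarrier y k) x := fun x hx ↦
    contDiffAt_logBarrier (hpos x hx).ne'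
  obtain ⟨x, hxσ, hxS⟩ := hnear
  obtain ⟨w, hwbd, hwx⟩ : ∃ w ∈ bd, logBarrier y k w ≤ logBarrier y k x :=
    hS.exists_mem_bd_le hcpt (fun z hz ↦ (hsmooth z hz).continuousAt.continuousWithinAt)
      (fun z hz ↦ hsmooth z hz.1)
      (fun z hz ↦ levelSetCurvature_logBarrier_neg hk (hfar z hz.1)) hxS
  have hxy : 0 < dist x y ^ 2 := by
    linarith [dist_sq_eq_axisDistSq_add x y, sq_nonneg (x 2 - y 2), hpos x hxS]
  have hlt : dist x y ^ 2 * exp (k * δ ^ 2) < R ^ 2 - δ ^ 2 :=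
    (mul_lt_mul_of_pos_right (pow_lt_pow_left₀ hxσ dist_nonneg two_ne_zero) (exp_pos _)).trans_le
      hσR
  have hloglt : log (dist x y ^ 2) + k * δ ^ 2 < log (R ^ 2 - δ ^ 2) := by
    simpa only [log_mul hxy.ne' (exp_ne_zero _), log_exp] using log_lt_log (by positivity) hlt
  have hRδ : 0 < R ^ 2 - δ ^ 2 := (by positivity : (0 : ℝ) < _).trans hlt
  have hw := log_sub_le_logBarrier hk hRδ (pow_le_pow_left₀ hR (hbd w hwbd) 2)
    (hslab w (hS.1 hwbd))
  linarith [logBarrier_le_log_dist_sq hk (hpos x hxS)]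

theorem sinSqθ₀_le_one : sinSqθ₀ ≤ 1 :=
  div_le_one_of_le₀ (by linarith [sq_nonneg (cosh tcrit)]) (by positivity)

theorem axisDistSq_pos_of_mem_Ncone (hx : x ∈ Ncone y) : 0 < axisDistSq y x := by
  have hle : dist x y ^ 2 * sinSqθ₀ ≤ dist x y ^ 2 :=
    mul_le_of_le_one_right (sq_nonneg _) sinSqθ₀_le_one
  linarith [hx.2, dist_sq_eq_axisDistSq_add x y]

theorem lt_of_slab_diff_ball_subset_Ncone {r : ℝ} (hr : 0 ≤ r)
    (hsub : {x : R3 | |x 2 - y 2| ≤ δ} \ ball y r ⊆ Ncone y) : δ < r := by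
  by_contra! hle
  let pole : R3 := toR3 (y 0) (y 1) (y 2 + r)
  have haxis : axisDistSq y pole = 0 := by simp [pole, toR3, axisDistSq]
  have hheight : pole 2 - y 2 = r := by simp [pole, toR3]
  have hdist : dist pole y = r := by
    rw [← sq_eq_sq₀ dist_nonneg hr, dist_sq_eq_axisDistSq_add, haxis, hheight, zero_add]
  have hpole : pole ∈ Ncone y :=
    hsub ⟨by simpa [hheight, abs_of_nonneg hr] using hle, by simp [hdist]⟩
  exact (axisDistSq_pos_of_mem_Ncone hpole).ne' haxis

end Slab

theorem stmt12_general {S bd : Set R3} {y : R3} {h : ℝ} (hcpt : IsCompact S)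
    (hmin : IsMinimalSurface S bd) (hbd : ∀ x ∈ bd, h ≤ dist x y)
    (hslab : ∀ x ∈ S, |x 2 - y 2| ≤ h / 8) (hnear : (ball y (3 * h / 4) ∩ S).Nonempty) :
    (ball y (h / 4) ∩ S).Nonempty := by
  have hh : 0 < h := by linarith [nonempty_ball.mp hnear.left]
  have hexp : exp (24 / h ^ 2 * (h / 8) ^ 2) ≤ 8 / 5 := by
    rw [show 24 / h ^ 2 * (h / 8) ^ 2 = 3 / 8 by field_simp; norm_num]
    exact (exp_bound_div_one_sub_of_interval (by norm_num) (by norm_num)).trans_eq (by norm_num)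
  -- Any `k` with `64 / 3 < k h² ≤ 64 log (7 / 4) ≈ 35.8` works.
  refine hmin.ball_inter_nonempty_of_slab (k := 24 / h ^ 2) hcpt hslab hbd hnear (by positivity)
    hh.le (by positivity) ?_ ?_
  · field_simp
    norm_num
  · linarith [mul_le_mul_of_nonneg_left hexp (sq_nonneg h), sq_nonneg h]

/-- A compact embedded minimal surface in a narrow slab, with boundary on the sphere
`∂B_h(y)`, which comes within `3h/4` of the center `y`, must come within `h/4` of `y`.
Here `β_A > 0` is a constant such that the slab minus `B_{h/8}(y)` lies in the solid
cone `N_{θ₀}(y)` and the leaf `{f_y = 3h/16}` within the slab lies in `B_{7h/32}(y)`. -/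
theorem stmt12 (S bd : Set R3) (hcpt : IsCompact S) (hmin : IsMinimalSurface S bd)
    (y : R3) (h βA : ℝ) (hh : 0 < h) (hβA : 0 < βA)
    (hβA1 : {x : R3 | |x 2 - y 2| ≤ 2 * βA * h} \ ball y (h / 8) ⊆ Ncone y)
    (hβA2 : {x : R3 | fCat y x = 3 * h / 16} ∩ {x : R3 | |x 2 - y 2| ≤ 2 * βA * h} ⊆
      ball y (7 * h / 32))
    (hbd : bd ⊆ sphere y h)
    (hslab : S ⊆ closedBall y h ∩ {x : R3 | |x 2 - y 2| ≤ 2 * βA * h})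
    (hnear : (ball y (3 * h / 4) ∩ S).Nonempty) :
    (ball y (h / 4) ∩ S).Nonempty := by
  have hβh : 2 * βA * h < h / 8 := lt_of_slab_diff_ball_subset_Ncone (by positivity) hβA1
  exact stmt12_general hcpt hmin (fun x hx ↦ (hbd hx).ge)
    (fun x hx ↦ (hslab hx).2.trans hβh.le) hnear

end
end

section
/- Let Σ ⊂ ℝ³ be a compact embedded minimal surface contained in the slab {|x₃| ≤ 2β_A h}. Let p, q be points in the plane {x₃ = 0} with T_h(γ_{p,q}) ∩ ∂Σ = ∅, where γ_{p,q} is the line segment from p to q and T_h denotes the tubular neighborhood of radius h. If y_p ∈ B_{h/4}(p) ∩ Σ, then there is a connected curve ν ⊂ T_h(γ_{p,q}) ∩ Σ joining y_p to a point of B_{h/4}(q) ∩ Σ. -/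
open Real Set Pointwise Metric

noncomputable section

/-!
The catenoid foliation is replaced by one quadratic barrier. Suppose that `⟪T (x - y), x - y⟫`,
with `T` symmetric, has a local minimum on a minimal surface at an interior point `z`. The first
variation makes `w = T (z - y)` normal to the surface, and summing the second variation over the
tangent plane, where the mean curvature term drops out, gives `⟪T w, w⟫ ≤ tr T * ‖w‖ ^ 2`. For
`T = diag(1, 1, -2)` this reads `‖z - y‖ ≤ 3 * |z 2 - y 2|`.

In a slab of half-width `δ` about `y`, the barrier differs from `‖x - y‖ ^ 2` by at most
`3 * δ ^ 2`, so a path component of the surface that comes close enough to `y` attains the minimum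
of the barrier away from the boundary of the tube, hence at distance at most `3 * δ` from `y`. This
propagates along any connected set of centres `y`. Since `sin² θ₀ ≤ 1 / 3`, the cone hypothesis
gives `12 * δ < h`, so that `3 * δ < h / 4`.
-/

open Filter Topology
open scoped InnerProductSpace

theorem deriv_deriv_nonneg_of_isLocalMin {f : ℝ → ℝ} {a : ℝ} (hf : ContinuousAt f a)
    (hmin : IsLocalMin f a) : 0 ≤ deriv (deriv f) a := by
  by_contra! hneg
  have hmax : IsLocalMax f a := isLocalMax_of_deriv_deriv_neg hneg hmin.deriv_eq_zero hf
  have hconst : f =ᶠ[𝓝 a] fun _ => f a := by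
    filter_upwards [hmin, hmax] with x hle hge using le_antisymm hge hle
  have hzero : deriv (deriv f) a = 0 := by simpa using hconst.deriv.deriv_eq
  exact hneg.ne hzero

section QuadraticForm

variable {E : Type*} [NormedAddCommGroup E] [InnerProductSpace ℝ E] {T : E →L[ℝ] E}

theorem hasDerivAt_inner_map_self (hT : (T : E →ₗ[ℝ] E).IsSymmetric) {γ : ℝ → E} {γ' : E} {t : ℝ}
    (hγ : HasDerivAt γ γ' t) : HasDerivAt (fun t => ⟪T (γ t), γ t⟫_ℝ) (2 * ⟪T (γ t), γ'⟫_ℝ) t := by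
  have hsymm : ⟪T γ', γ t⟫_ℝ = ⟪T (γ t), γ'⟫_ℝ := by
    rw [real_inner_comm]
    exact (hT (γ t) γ').symm
  refine ((T.hasFDerivAt.comp_hasDerivAt t hγ).inner ℝ hγ).congr_deriv ?_
  rw [hsymm, two_mul, Function.comp_apply]

theorem inner_map_eq_zero_of_isLocalMin (hT : (T : E →ₗ[ℝ] E).IsSymmetric) {γ : ℝ → E} {γ' : E}
    {t : ℝ} (hγ : HasDerivAt γ γ' t) (hmin : IsLocalMin (fun t => ⟪T (γ t), γ t⟫_ℝ) t) :
    ⟪T (γ t), γ'⟫_ℝ = 0 := by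
  simpa using hmin.hasDerivAt_eq_zero (hasDerivAt_inner_map_self hT hγ)

theorem second_variation_nonneg_of_isLocalMin (hT : (T : E →ₗ[ℝ] E).IsSymmetric) {γ γ' : ℝ → E}
    {γ'' : E} {t : ℝ} (hγ : ∀ᶠ s in 𝓝 t, HasDerivAt γ (γ' s) s) (hγ' : HasDerivAt γ' γ'' t)
    (hmin : IsLocalMin (fun t => ⟪T (γ t), γ t⟫_ℝ) t) :
    0 ≤ ⟪T (γ' t), γ' t⟫_ℝ + ⟪T (γ t), γ''⟫_ℝ := by
  have hderiv : deriv (fun t => ⟪T (γ t), γ t⟫_ℝ) =ᶠ[𝓝 t] fun s => 2 * ⟪T (γ s), γ' s⟫_ℝ := by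
    filter_upwards [hγ] with s hs using (hasDerivAt_inner_map_self hT hs).deriv
  have hγt := hγ.self_of_nhds
  have hderiv₂ := ((T.hasFDerivAt.comp_hasDerivAt t hγt).inner ℝ hγ').const_mul 2
  have hnonneg := deriv_deriv_nonneg_of_isLocalMin
    (hasDerivAt_inner_map_self hT hγt).continuousAt hmin
  rw [hderiv.deriv_eq] at hnonneg
  have := hderiv₂.deriv
  simp only [Function.comp_apply] at this
  linarith

end QuadraticForm

/-- The graph of `u` in the frame `b`: the point `s₀ b₀ + s₁ b₁ + u(s) b₂`. Applied to the
derivative of `u`, it gives the tangent vectors of the graph. -/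
def graphMap {E : Type*} [AddCommGroup E] [Module ℝ E] (b : Fin 3 → E) (u : R2 → ℝ) (s : R2) : E :=
  s 0 • b 0 + s 1 • b 1 + u s • b 2

section GraphMap

variable {E : Type*} [NormedAddCommGroup E] [NormedSpace ℝ E] {u : R2 → ℝ} {s : R2}

theorem continuousAt_graphMap (b : Fin 3 → E) (hu : ContinuousAt u s) :
    ContinuousAt (graphMap b u) s := by
  unfold graphMap
  fun_prop

theorem hasDerivAt_add_smul_const (s ξ : E) (t : ℝ) : HasDerivAt (fun t : ℝ => s + t • ξ) ξ t := by
  simpa using ((hasDerivAt_id t).smul_const ξ).const_add s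

theorem hasDerivAt_graphMap_line (b : Fin 3 → E) {ξ : R2} {t : ℝ}
    (hu : DifferentiableAt ℝ u (s + t • ξ)) :
    HasDerivAt (fun t : ℝ => graphMap b u (s + t • ξ))
      (graphMap b (fderiv ℝ u (s + t • ξ)) ξ) t := by
  have hcoord : ∀ i, HasDerivAt (fun t : ℝ => (s + t • ξ) i) (ξ i) t := fun i => by
    simpa using hasDerivAt_add_smul_const (s i) (ξ i) t
  have hheight := hu.hasFDerivAt.comp_hasDerivAt t (hasDerivAt_add_smul_const s ξ t)
  exact (((hcoord 0).smul_const (b 0)).add ((hcoord 1).smul_const (b 1))).add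
    (hheight.smul_const (b 2))

theorem hasDerivAt_graphMap_fderiv_line (b : Fin 3 → E) (ξ : R2)
    (hu : DifferentiableAt ℝ (fderiv ℝ u) s) :
    HasDerivAt (fun t : ℝ => graphMap b (fderiv ℝ u (s + t • ξ)) ξ)
      (fderiv ℝ (fderiv ℝ u) s ξ ξ • b 2) 0 := by
  have hu' : HasFDerivAt (fderiv ℝ u) (fderiv ℝ (fderiv ℝ u) s) (s + (0 : ℝ) • ξ) := by
    simpa using hu.hasFDerivAt
  have hfderiv : HasDerivAt (fun t : ℝ => fderiv ℝ u (s + t • ξ)) (fderiv ℝ (fderiv ℝ u) s ξ) 0 :=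
    hu'.comp_hasDerivAt 0 (hasDerivAt_add_smul_const s ξ 0)
  have hslope : HasDerivAt (fun t : ℝ => fderiv ℝ u (s + t • ξ) ξ)
      (fderiv ℝ (fderiv ℝ u) s ξ ξ) 0 := by
    simpa using hfderiv.clm_apply (hasDerivAt_const (0 : ℝ) ξ)
  exact (hslope.smul_const (b 2)).const_add (ξ 0 • b 0 + ξ 1 • b 1)

end GraphMap

section MinimalGraph

variable {u : R2 → ℝ} {s : R2}

/-- The direction `(∂₁u, -∂₀u)` tangent to the level set of `u`: together with `∂₀` and `∂₁` it is
the third direction over which the second derivatives of `u` are summed. -/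
def levelDirection (u : R2 → ℝ) (s : R2) : R2 :=
  fderiv ℝ u s (e2 1) • e2 0 - fderiv ℝ u s (e2 0) • e2 1

theorem sum_hessian_eq_zero_of_satisfiesMSE {Ω : Set R2} (hu : SatisfiesMSE u Ω) (hs : s ∈ Ω) :
    fderiv ℝ (fderiv ℝ u) s (e2 0) (e2 0) + fderiv ℝ (fderiv ℝ u) s (e2 1) (e2 1) +
      fderiv ℝ (fderiv ℝ u) s (levelDirection u s) (levelDirection u s) = 0 := by
  obtain ⟨hC2, hMSE⟩ := hu s hs
  have hdiff : DifferentiableAt ℝ (fderiv ℝ u) s :=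
    (hC2.fderiv_right (m := 1) (by norm_num)).differentiableAt one_ne_zero
  have hpartial : ∀ ξ η : R2,
      fderiv ℝ (fun q => fderiv ℝ u q ξ) s η = fderiv ℝ (fderiv ℝ u) s η ξ := fun ξ η => by
    simp [fderiv_clm_apply hdiff (differentiableAt_const ξ)]
  have hsymm : fderiv ℝ (fderiv ℝ u) s (e2 0) (e2 1) = fderiv ℝ (fderiv ℝ u) s (e2 1) (e2 0) :=
    hC2.isSymmSndFDerivAt (by simp) (e2 0) (e2 1)
  rw [hpartial, hpartial, hpartial] at hMSE
  simp only [levelDirection, map_sub, map_smul, _root_.sub_apply,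
    _root_.smul_apply, smul_eq_mul, hsymm]
  linear_combination hMSE

variable {E : Type*} [NormedAddCommGroup E] [InnerProductSpace ℝ E]

/-- The upward normal `b₂ - ∂₀u b₀ - ∂₁u b₁` of the graph of `u`, not normalised. -/
def graphNormal (b : Fin 3 → E) (u : R2 → ℝ) (s : R2) : E :=
  b 2 - fderiv ℝ u s (e2 0) • b 0 - fderiv ℝ u s (e2 1) • b 1

theorem graphMap_e2_zero (b : Fin 3 → E) (L : R2 → ℝ) :
    graphMap b L (e2 0) = b 0 + L (e2 0) • b 2 := by
  simp [graphMap, e2]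

theorem graphMap_e2_one (b : Fin 3 → E) (L : R2 → ℝ) :
    graphMap b L (e2 1) = b 1 + L (e2 1) • b 2 := by
  simp [graphMap, e2]

theorem graphMap_fderiv_levelDirection (b : Fin 3 → E) (u : R2 → ℝ) (s : R2) :
    graphMap b (fderiv ℝ u s) (levelDirection u s) =
      fderiv ℝ u s (e2 1) • b 0 - fderiv ℝ u s (e2 0) • b 1 := by
  have hlevel : fderiv ℝ u s (levelDirection u s) = 0 := by
    simp only [levelDirection, map_sub, map_smul, smul_eq_mul]
    ring
  rw [graphMap, hlevel]
  simp [levelDirection, e2, sub_eq_add_neg]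

theorem norm_sq_graphNormal (b : OrthonormalBasis (Fin 3) ℝ E) (u : R2 → ℝ) (s : R2) :
    ‖graphNormal b u s‖ ^ 2 = 1 + fderiv ℝ u s (e2 0) ^ 2 + fderiv ℝ u s (e2 1) ^ 2 := by
  rw [← real_inner_self_eq_norm_sq]
  simp only [graphNormal, inner_sub_left, inner_sub_right, real_inner_smul_left,
    real_inner_smul_right, b.inner_eq_ite, Fin.reduceEq, if_true, if_false]
  ring

-- The tangent vectors `Xᵢ` below satisfy `∑ Xᵢ Xᵢᵀ = |ν|² - ν νᵀ` with `ν` the normal.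
theorem sum_inner_map_tangent_eq (T : E →ₗ[ℝ] E) (b : OrthonormalBasis (Fin 3) ℝ E)
    (u : R2 → ℝ) (s : R2) :
    ⟪T (graphMap b (fderiv ℝ u s) (e2 0)), graphMap b (fderiv ℝ u s) (e2 0)⟫_ℝ +
        ⟪T (graphMap b (fderiv ℝ u s) (e2 1)), graphMap b (fderiv ℝ u s) (e2 1)⟫_ℝ +
        ⟪T (graphMap b (fderiv ℝ u s) (levelDirection u s)),
          graphMap b (fderiv ℝ u s) (levelDirection u s)⟫_ℝ =
      LinearMap.trace ℝ E T * ‖graphNormal b u s‖ ^ 2 -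
        ⟪T (graphNormal b u s), graphNormal b u s⟫_ℝ := by
  rw [norm_sq_graphNormal, graphMap_e2_zero, graphMap_e2_one, graphMap_fderiv_levelDirection,
    T.trace_eq_sum_inner b, Fin.sum_univ_three]
  simp only [graphNormal, map_add, map_sub, map_smul, inner_add_left, inner_add_right,
    inner_sub_left, inner_sub_right, real_inner_smul_left, real_inner_smul_right,
    real_inner_comm (T _) (b _)]
  ring

theorem eq_smul_graphNormal (b : OrthonormalBasis (Fin 3) ℝ E) {w : E}
    (hw : ∀ ξ, ⟪w, graphMap b (fderiv ℝ u s) ξ⟫_ℝ = 0) : w = ⟪w, b 2⟫_ℝ • graphNormal b u s := by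
  have h₀ := hw (e2 0)
  have h₁ := hw (e2 1)
  rw [graphMap_e2_zero, inner_add_right, real_inner_smul_right] at h₀
  rw [graphMap_e2_one, inner_add_right, real_inner_smul_right] at h₁
  have hsum := b.sum_repr' w
  simp only [Fin.sum_univ_three, real_inner_comm w, eq_neg_of_add_eq_zero_left h₀,
    eq_neg_of_add_eq_zero_left h₁] at hsum
  conv_lhs => rw [← hsum]
  rw [graphNormal]
  module

theorem first_variation_graph (b : Fin 3 → E) {T : E →L[ℝ] E} (hT : (T : E →ₗ[ℝ] E).IsSymmetric)
    (y : E) (hu : DifferentiableAt ℝ u s)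
    (hmin : IsLocalMin (fun s => ⟪T (graphMap b u s - y), graphMap b u s - y⟫_ℝ) s) (ξ : R2) :
    ⟪T (graphMap b u s - y), graphMap b (fderiv ℝ u s) ξ⟫_ℝ = 0 := by
  have hline : s + (0 : ℝ) • ξ = s := by simp
  have hγ := (hasDerivAt_graphMap_line b (t := 0) (by rwa [hline])).sub_const y
  have htendsto : Tendsto (fun t : ℝ => s + t • ξ) (𝓝 0) (𝓝 s) := by
    simpa using (hasDerivAt_add_smul_const s ξ 0).continuousAt.tendsto
  have h := inner_map_eq_zero_of_isLocalMin hT hγ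
    (by simpa only [IsLocalMin, IsMinFilter, hline] using htendsto.eventually hmin)
  simpa only [hline] using h

theorem second_variation_graph (b : Fin 3 → E) {T : E →L[ℝ] E} (hT : (T : E →ₗ[ℝ] E).IsSymmetric)
    (y : E) (hu : ContDiffAt ℝ 2 u s)
    (hmin : IsLocalMin (fun s => ⟪T (graphMap b u s - y), graphMap b u s - y⟫_ℝ) s) (ξ : R2) :
    0 ≤ ⟪T (graphMap b (fderiv ℝ u s) ξ), graphMap b (fderiv ℝ u s) ξ⟫_ℝ +
      fderiv ℝ (fderiv ℝ u) s ξ ξ * ⟪T (graphMap b u s - y), b 2⟫_ℝ := by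
  have hline : s + (0 : ℝ) • ξ = s := by simp
  have htendsto : Tendsto (fun t : ℝ => s + t • ξ) (𝓝 0) (𝓝 s) := by
    simpa using (hasDerivAt_add_smul_const s ξ 0).continuousAt.tendsto
  have hγ : ∀ᶠ t : ℝ in 𝓝 0, HasDerivAt (fun t : ℝ => graphMap b u (s + t • ξ) - y)
      (graphMap b (fderiv ℝ u (s + t • ξ)) ξ) t := by
    filter_upwards [htendsto.eventually (hu.eventually (by simp))] with t ht
    exact (hasDerivAt_graphMap_line b (ht.differentiableAt two_ne_zero)).sub_const y
  have hγ' := hasDerivAt_graphMap_fderiv_line b ξ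
    ((hu.fderiv_right (m := 1) (by norm_num)).differentiableAt one_ne_zero)
  have h := second_variation_nonneg_of_isLocalMin hT hγ hγ'
    (by simpa only [IsLocalMin, IsMinFilter, hline] using htendsto.eventually hmin)
  simpa only [hline, real_inner_smul_right] using h

theorem inner_map_normal_le_of_isLocalMin_graph {Ω : Set R2} (hu : SatisfiesMSE u Ω) (hs : s ∈ Ω)
    (b : OrthonormalBasis (Fin 3) ℝ E) {T : E →L[ℝ] E} (hT : (T : E →ₗ[ℝ] E).IsSymmetric) (y : E)
    (hmin : IsLocalMin (fun s => ⟪T (graphMap b u s - y), graphMap b u s - y⟫_ℝ) s) :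
    ⟪T (graphNormal b u s), graphNormal b u s⟫_ℝ ≤
      LinearMap.trace ℝ E T * ‖graphNormal b u s‖ ^ 2 := by
  have hsecond := second_variation_graph b hT y (hu s hs).1 hmin
  have h₀ := hsecond (e2 0)
  have h₁ := hsecond (e2 1)
  have h₂ := hsecond (levelDirection u s)
  have htrace := sum_inner_map_tangent_eq (T : E →ₗ[ℝ] E) b u s
  simp only [ContinuousLinearMap.coe_coe] at htrace
  linear_combination h₀ + h₁ + h₂ + htrace +
    ⟪T (graphMap b u s - y), b 2⟫_ℝ * sum_hessian_eq_zero_of_satisfiesMSE hu hs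

theorem inner_map_map_le_of_isLocalMin_graph {Ω : Set R2} (hu : SatisfiesMSE u Ω)
    (hs : s ∈ Ω) (b : OrthonormalBasis (Fin 3) ℝ E) {T : E →L[ℝ] E}
    (hT : (T : E →ₗ[ℝ] E).IsSymmetric) (y : E)
    (hmin : IsLocalMin (fun s => ⟪T (graphMap b u s - y), graphMap b u s - y⟫_ℝ) s) :
    ⟪T (T (graphMap b u s - y)), T (graphMap b u s - y)⟫_ℝ ≤
      LinearMap.trace ℝ E T * ‖T (graphMap b u s - y)‖ ^ 2 := by
  have hnormal := eq_smul_graphNormal b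
    (first_variation_graph b hT y ((hu s hs).1.differentiableAt two_ne_zero) hmin)
  rw [hnormal, map_smul, real_inner_smul_left, real_inner_smul_right, norm_smul, mul_pow,
    Real.norm_eq_abs, sq_abs]
  linear_combination ⟪T (graphMap b u s - y), b 2⟫_ℝ ^ 2 *
    inner_map_normal_le_of_isLocalMin_graph hu hs b hT y hmin

end MinimalGraph

@[simp] theorem toR3_apply_zero (a b c : ℝ) : toR3 a b c 0 = a := rfl

@[simp] theorem toR3_apply_one (a b c : ℝ) : toR3 a b c 1 = b := rfl

@[simp] theorem toR3_apply_two (a b c : ℝ) : toR3 a b c 2 = c := rfl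

section Chart

theorem toR3_eq_graphMap (u : R2 → ℝ) (s : R2) :
    toR3 (s 0) (s 1) (u s) = graphMap (EuclideanSpace.basisFun (Fin 3) ℝ) u s := by
  ext i
  fin_cases i <;> simp [graphMap]

theorem pr_toR3 (s : R2) (c : ℝ) : pr (toR3 (s 0) (s 1) c) = s := by
  ext i
  fin_cases i <;> simp [pr]

theorem continuous_pr : Continuous pr := by
  refine (PiLp.continuous_toLp 2 _).comp (continuous_pi fun i => ?_)
  fin_cases i <;> exact PiLp.continuous_apply 2 _ _

theorem map_graphMap_nhds_eq_nhdsWithin {S : Set R3} {z : R3} {u : R2 → ℝ} {ε : ℝ} (hε : 0 < ε)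
    (hz : z ∈ S) (hu : ContinuousAt u (pr z))
    (hS : S ∩ {x : R3 | dist (pr x) (pr z) < ε ∧ |x 2 - z 2| < ε} =
      {x : R3 | pr x ∈ ball (pr z) ε ∧ x = toR3 (x 0) (x 1) (u (pr x)) ∧ |x 2 - z 2| < ε}) :
    graphMap (EuclideanSpace.basisFun (Fin 3) ℝ) u (pr z) = z ∧
      map (graphMap (EuclideanSpace.basisFun (Fin 3) ℝ) u) (𝓝 (pr z)) = 𝓝[S] z := by
  set G := graphMap (EuclideanSpace.basisFun (Fin 3) ℝ) u with hG
  have hmem_iff : ∀ x, dist (pr x) (pr z) < ε → |x 2 - z 2| < ε → (x ∈ S ↔ G (pr x) = x) := by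
    intro x hpr hheight
    have hx := Set.ext_iff.1 hS x
    rw [hG, ← toR3_eq_graphMap, eq_comm]
    change x ∈ S ↔ x = toR3 (x 0) (x 1) (u (pr x))
    simpa only [mem_inter_iff, mem_ofPred_eq, mem_ball, hpr, hheight, and_true, true_and] using hx
  have hGz : G (pr z) = z := (hmem_iff z (by simpa using hε) (by simpa using hε)).1 hz
  have hGcont : Tendsto G (𝓝 (pr z)) (𝓝 z) := by
    have h := continuousAt_graphMap (EuclideanSpace.basisFun (Fin 3) ℝ) hu
    rwa [ContinuousAt, ← hG, hGz] at h
  have hcyl : ∀ᶠ x in 𝓝 z, dist (pr x) (pr z) < ε ∧ |x 2 - z 2| < ε :=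
    (continuous_pr.continuousAt.eventually (ball_mem_nhds _ hε)).and
      ((PiLp.continuous_apply 2 _ 2).continuousAt.eventually (ball_mem_nhds (z 2) hε))
  have hprG : ∀ s, pr (G s) = s := fun s => by
    rw [hG, ← toR3_eq_graphMap, pr_toR3]
  refine ⟨hGz, le_antisymm (tendsto_nhdsWithin_iff.2 ⟨hGcont, ?_⟩) ?_⟩
  · filter_upwards [hGcont.eventually hcyl] with s hs
    exact (hmem_iff _ hs.1 hs.2).2 (by rw [hprG])
  · refine le_map_of_right_inverse ?_ continuous_pr.continuousAt.continuousWithinAt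
    filter_upwards [nhdsWithin_le_nhds hcyl, self_mem_nhdsWithin] with x hx hxS
    exact (hmem_iff x hx.1 hx.2).1 hxS

variable {S bd : Set R3} {z : R3}

theorem IsMinimalSurface.exists_chart (hS : IsMinimalSurface S bd) (hz : z ∈ S \ bd) :
    ∃ (b : OrthonormalBasis (Fin 3) ℝ R3) (u : R2 → ℝ) (s : R2) (Ω : Set R2),
      SatisfiesMSE u Ω ∧ s ∈ Ω ∧ graphMap b u s = z ∧ map (graphMap b u) (𝓝 s) = 𝓝[S] z := by
  obtain ⟨Q, ε, u, hε, hu, hgraph⟩ := hS.2 z hz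
  have hs : pr (Q z) ∈ ball (pr (Q z)) ε := mem_ball_self hε
  obtain ⟨hcenter, hmap⟩ := map_graphMap_nhds_eq_nhdsWithin hε (mem_image_of_mem Q hz.1)
    (hu _ hs).1.continuousAt hgraph
  set b := (EuclideanSpace.basisFun (Fin 3) ℝ).map Q.symm with hb
  have hrotate : graphMap b u = Q.symm ∘ graphMap (EuclideanSpace.basisFun (Fin 3) ℝ) u := by
    ext1 s
    simp only [graphMap, hb, OrthonormalBasis.map_apply, Function.comp_apply, map_add, map_smul]
  refine ⟨b, u, pr (Q z), ball (pr (Q z)) ε, hu, hs, ?_, ?_⟩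
  · rw [hrotate, Function.comp_apply, hcenter, Q.symm_apply_apply]
  · have hQ : map Q.symm (𝓝[Q '' S] Q z) = 𝓝[Q.symm '' (Q '' S)] Q.symm (Q z) :=
      Q.symm.toHomeomorph.isEmbedding.map_nhdsWithin_eq (Q '' S) (Q z)
    rw [hrotate, ← map_map, hmap, hQ, Q.symm_apply_apply, image_image]
    simp only [Q.symm_apply_apply, image_id']

theorem IsMinimalSurface.inner_map_map_le_of_isLocalMinOn (hS : IsMinimalSurface S bd)
    (hz : z ∈ S \ bd) {T : R3 →L[ℝ] R3} (hT : (T : R3 →ₗ[ℝ] R3).IsSymmetric) (y : R3)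
    (hmin : IsLocalMinOn (fun x => ⟪T (x - y), x - y⟫_ℝ) S z) :
    ⟪T (T (z - y)), T (z - y)⟫_ℝ ≤ LinearMap.trace ℝ R3 T * ‖T (z - y)‖ ^ 2 := by
  obtain ⟨b, u, s, Ω, hu, hs, rfl, hmap⟩ := hS.exists_chart hz
  refine inner_map_map_le_of_isLocalMin_graph hu hs b hT y ?_
  rwa [IsLocalMinOn, IsMinFilter, ← hmap, eventually_map] at hmin

theorem IsMinimalSurface.eventually_joinedIn (hS : IsMinimalSurface S bd) (hz : z ∈ S \ bd)
    {A : Set R3} (hA : A ∈ 𝓝[S] z) : ∀ᶠ x in 𝓝[S] z, JoinedIn A z x := by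
  obtain ⟨b, u, s, Ω, hu, hs, rfl, hmap⟩ := hS.exists_chart hz
  have hcont : ∀ᶠ t in 𝓝 s, ContinuousAt (graphMap b u) t := by
    filter_upwards [(hu s hs).1.eventually (by simp)] with t ht
    exact continuousAt_graphMap b ht.continuousAt
  rw [← hmap] at hA ⊢
  obtain ⟨δ, hδ, hball⟩ := Metric.eventually_nhds_iff_ball.1 (hcont.and (mem_map.1 hA))
  have hpath : IsPathConnected (graphMap b u '' ball s δ) :=
    ((convex_ball s δ).isPathConnected ⟨s, mem_ball_self hδ⟩).image'
      fun t ht => (hball t ht).1.continuousWithinAt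
  refine eventually_map.2 (eventually_of_mem (ball_mem_nhds s hδ) fun t ht => ?_)
  exact (hpath.joinedIn _ (mem_image_of_mem _ (mem_ball_self hδ)) _ (mem_image_of_mem _ ht)).mono
    (image_subset_iff.2 fun t ht => (hball t ht).2)

end Chart

section Saddle

/-- The trace-free symmetric map `diag(1, 1, -2)`, whose quadratic form `x₀² + x₁² - 2x₂²` is the
barrier replacing the catenoid foliation. -/
def saddle : R3 →L[ℝ] R3 :=
  (Matrix.toEuclideanLin (Matrix.diagonal ![1, 1, -2])).toContinuousLinearMap

theorem saddle_apply (x : R3) : saddle x = toR3 (x 0) (x 1) (-2 * x 2) := by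
  ext i
  fin_cases i <;> simp [saddle, Matrix.mulVec_diagonal, Matrix.toLpLin_apply]

theorem isSymmetric_saddle : (saddle : R3 →ₗ[ℝ] R3).IsSymmetric :=
  (Matrix.isSymmetric_toEuclideanLin_iff).2 (Matrix.isHermitian_diagonal _)

theorem norm_sq_eq_sum_three (x : R3) : ‖x‖ ^ 2 = x 0 ^ 2 + x 1 ^ 2 + x 2 ^ 2 := by
  simp [EuclideanSpace.real_norm_sq_eq, Fin.sum_univ_three]

theorem inner_saddle_self (x : R3) : ⟪saddle x, x⟫_ℝ = ‖x‖ ^ 2 - 3 * x 2 ^ 2 := by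
  rw [norm_sq_eq_sum_three, saddle_apply]
  simp only [PiLp.inner_apply, RCLike.inner_apply, conj_trivial, Fin.sum_univ_three,
    toR3_apply_zero, toR3_apply_one, toR3_apply_two]
  ring

theorem trace_saddle : LinearMap.trace ℝ R3 saddle = 0 := by
  rw [LinearMap.trace_eq_sum_inner _ (EuclideanSpace.basisFun (Fin 3) ℝ), Fin.sum_univ_three]
  simp only [ContinuousLinearMap.coe_coe, EuclideanSpace.basisFun_apply,
    EuclideanSpace.inner_single_left, saddle_apply, toR3_apply_zero, toR3_apply_one,
    toR3_apply_two, PiLp.single_apply]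
  norm_num

theorem IsMinimalSurface.norm_sub_le_of_isLocalMinOn_saddle {S bd : Set R3}
    (hS : IsMinimalSurface S bd) {z : R3} (hz : z ∈ S \ bd) (y : R3)
    (hmin : IsLocalMinOn (fun x => ⟪saddle (x - y), x - y⟫_ℝ) S z) :
    ‖z - y‖ ≤ 3 * |z 2 - y 2| := by
  have h := hS.inner_map_map_le_of_isLocalMinOn hz isSymmetric_saddle y hmin
  rw [trace_saddle, zero_mul, inner_saddle_self, norm_sq_eq_sum_three] at h
  refine abs_le_of_sq_le_sq' ?_ (by positivity) |>.2
  rw [norm_sq_eq_sum_three, mul_pow, sq_abs]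
  simp only [saddle_apply, toR3_apply_zero, toR3_apply_one, toR3_apply_two, PiLp.sub_apply] at h ⊢
  linarith

end Saddle

section Propagation

variable {S bd T : Set R3} {δ R : ℝ}

theorem IsMinimalSurface.isClosed_setOf_joinedIn_inter (hS : IsMinimalSurface S bd)
    (hclosed : IsClosed S) (hT : IsOpen T) (hbd : Disjoint T bd) {F : Set R3} (hF : IsClosed F)
    (hFT : F ⊆ T) (x₀ : R3) : IsClosed ({x | JoinedIn (S ∩ T) x₀ x} ∩ F) := by
  refine isClosed_of_closure_subset fun z hz => ?_
  have hzF : z ∈ F := closure_minimal inter_subset_right hF hz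
  have hzS : z ∈ S := closure_minimal (fun x hx => hx.1.target_mem.1) hclosed hz
  have hlocal := hS.eventually_joinedIn ⟨hzS, hbd.notMem_of_mem_left (hFT hzF)⟩
    (inter_mem self_mem_nhdsWithin (mem_nhdsWithin_of_mem_nhds (hT.mem_nhds (hFT hzF))))
  obtain ⟨x, hx, hzx⟩ :=
    ((mem_closure_iff_frequently.1 hz).and_eventually (eventually_nhdsWithin_iff.1 hlocal)).exists
  exact ⟨hx.1.trans (hzx hx.1.target_mem.1).symm, hzF⟩

theorem IsMinimalSurface.isLocalMinOn_of_isMinOn_joinedIn (hS : IsMinimalSurface S bd)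
    (hT : IsOpen T) (hbd : Disjoint T bd) {F : Set R3} {f : R3 → ℝ} {x₀ z : R3}
    (hz : JoinedIn (S ∩ T) x₀ z) (hF : F ∈ 𝓝 z)
    (hmin : IsMinOn f ({x | JoinedIn (S ∩ T) x₀ x} ∩ F) z) : IsLocalMinOn f S z := by
  have hzT := hz.target_mem.2
  have hlocal := hS.eventually_joinedIn ⟨hz.target_mem.1, hbd.notMem_of_mem_left hzT⟩
    (inter_mem self_mem_nhdsWithin (mem_nhdsWithin_of_mem_nhds (hT.mem_nhds hzT)))
  filter_upwards [hlocal, mem_nhdsWithin_of_mem_nhds hF] with x hzx hxF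
  exact hmin ⟨hz.trans hzx, hxF⟩

theorem IsMinimalSurface.exists_joinedIn_dist_le (hS : IsMinimalSurface S bd)
    (hclosed : IsClosed S) (hT : IsOpen T) (hbd : Disjoint T bd) {y : R3}
    (hslab : ∀ x ∈ S, |x 2 - y 2| ≤ δ) (hR : 0 ≤ R) (hball : closedBall y R ⊆ T) {x₀ x₁ : R3}
    (hx₁ : JoinedIn (S ∩ T) x₀ x₁) (hdist : dist x₁ y ^ 2 + 3 * δ ^ 2 < R ^ 2) :
    ∃ x, JoinedIn (S ∩ T) x₀ x ∧ dist x y ≤ 3 * δ := by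
  set f : R3 → ℝ := fun x => ⟪saddle (x - y), x - y⟫_ℝ with hf
  have hf_eq : ∀ x, f x = dist x y ^ 2 - 3 * (x 2 - y 2) ^ 2 := fun x => by
    simp only [hf, inner_saddle_self, dist_eq_norm, PiLp.sub_apply]
  have hx₁R : dist x₁ y ≤ R := le_of_sq_le_sq (by nlinarith [sq_nonneg δ]) hR
  have hcompact : IsCompact ({x | JoinedIn (S ∩ T) x₀ x} ∩ closedBall y R) :=
    (isCompact_closedBall y R).of_isClosed_subset
      (hS.isClosed_setOf_joinedIn_inter hclosed hT hbd isClosed_closedBall hball x₀)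
      inter_subset_right
  obtain ⟨z, ⟨hz, -⟩, hmin⟩ :=
    hcompact.exists_isMinOn ⟨x₁, hx₁, hx₁R⟩ (f := f) (by fun_prop)
  have hz_slab : (z 2 - y 2) ^ 2 ≤ δ ^ 2 :=
    sq_le_sq.2 ((hslab z hz.target_mem.1).trans (le_abs_self δ))
  have hz_lt : dist z y < R := by
    have hle : f z ≤ f x₁ := hmin ⟨hx₁, hx₁R⟩
    rw [hf_eq, hf_eq] at hle
    exact lt_of_pow_lt_pow_left₀ 2 hR (by nlinarith [sq_nonneg (x₁ 2 - y 2)])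
  have hlocal : IsLocalMinOn f S z := hS.isLocalMinOn_of_isMinOn_joinedIn hT hbd hz
    (closedBall_mem_nhds_of_mem hz_lt) hmin
  have hzS := hz.target_mem
  refine ⟨z, hz, ?_⟩
  calc dist z y = ‖z - y‖ := dist_eq_norm z y
    _ ≤ 3 * |z 2 - y 2| :=
      hS.norm_sub_le_of_isLocalMinOn_saddle ⟨hzS.1, hbd.notMem_of_mem_left hzS.2⟩ y hlocal
    _ ≤ 3 * δ := by gcongr; exact hslab z hzS.1

theorem IsMinimalSurface.exists_joinedIn_dist_le_of_isPreconnected (hS : IsMinimalSurface S bd)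
    (hclosed : IsClosed S) (hT : IsOpen T) (hbd : Disjoint T bd) {K : Set R3}
    (hK : IsPreconnected K) (hslab : ∀ y ∈ K, ∀ x ∈ S, |x 2 - y 2| ≤ δ) (hR : 0 ≤ R)
    (hδ : 12 * δ ^ 2 < R ^ 2) (hball : ∀ y ∈ K, closedBall y R ⊆ T) {p q : R3} (hp : p ∈ K)
    (hq : q ∈ K) {x₀ x₁ : R3} (hx₁ : JoinedIn (S ∩ T) x₀ x₁)
    (hdist : dist x₁ p ^ 2 + 3 * δ ^ 2 < R ^ 2) :
    ∃ x, JoinedIn (S ∩ T) x₀ x ∧ dist x q ≤ 3 * δ := by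
  let Near (y : R3) : Prop := ∃ x, JoinedIn (S ∩ T) x₀ x ∧ dist x y ≤ 3 * δ
  have hstep : ∀ y ∈ K, ∀ y' ∈ K, (3 * δ + dist y y') ^ 2 + 3 * δ ^ 2 < R ^ 2 →
      Near y → Near y' := by
    rintro y - y' hy' hyy' ⟨x, hx, hxy⟩
    have htri : dist x y' ≤ 3 * δ + dist y y' := (dist_triangle x y y').trans (by gcongr)
    refine hS.exists_joinedIn_dist_le hclosed hT hbd (hslab y' hy') hR (hball y' hy') hx ?_
    exact lt_of_le_of_lt (by gcongr) hyy'
  refine hK.induction₂' (fun y y' => Near y → Near y') (fun y hy => ?_)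
    (fun _ _ _ _ _ _ h h' => h' ∘ h) hp hq
    (hS.exists_joinedIn_dist_le hclosed hT hbd (hslab p hp) hR (hball p hp) hx₁ hdist)
  have hclose : ∀ᶠ y' in 𝓝 y, (3 * δ + dist y y') ^ 2 + 3 * δ ^ 2 < R ^ 2 := by
    refine ContinuousAt.eventually_lt (by fun_prop) continuousAt_const ?_
    rw [dist_self]
    linarith
  filter_upwards [mem_nhdsWithin_of_mem_nhds hclose, self_mem_nhdsWithin] with y' hyy' hy'
  exact ⟨hstep y hy y' hy' hyy', hstep y' hy' y hy (by rwa [dist_comm])⟩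

end Propagation

section CriticalCone

theorem one_add_sq_div_two_le_cosh (t : ℝ) : 1 + t ^ 2 / 2 ≤ cosh t := by
  have hsinh : |t / 2| ^ 2 ≤ sinh |t / 2| ^ 2 := by
    gcongr
    exact Real.self_le_sinh_iff.2 (abs_nonneg _)
  have hcosh : cosh t = 1 + 2 * sinh (t / 2) ^ 2 := by
    rw [← mul_div_cancel₀ t two_ne_zero, Real.cosh_two_mul, Real.cosh_sq,
      mul_div_cancel₀ t two_ne_zero]
    ring
  rw [← Real.abs_sinh, sq_abs, sq_abs] at hsinh
  linarith

theorem sinSqθ₀_nonneg : 0 ≤ sinSqθ₀ := by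
  unfold sinSqθ₀
  positivity

theorem sinSqθ₀_le_one_third : sinSqθ₀ ≤ 1 / 3 := by
  have hcosh : 2 * tcrit ^ 2 ≤ cosh tcrit ^ 2 := calc
    2 * tcrit ^ 2 ≤ (1 + tcrit ^ 2 / 2) ^ 2 := by linarith [sq_nonneg (1 - tcrit ^ 2 / 2)]
    _ ≤ cosh tcrit ^ 2 := by gcongr; exact one_add_sq_div_two_le_cosh tcrit
  rw [sinSqθ₀, div_le_iff₀ (by positivity)]
  linarith

theorem sq_lt_of_slab_diff_ball_subset_Ncone {y : R3} {δ r : ℝ} (hδ : 0 ≤ δ) (hr : 0 ≤ r)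
    (hcone : {x : R3 | |x 2 - y 2| ≤ δ} \ ball y r ⊆ Ncone y) : δ ^ 2 < r ^ 2 * sinSqθ₀ := by
  by_contra! hle
  have hσ : 0 ≤ 1 - sinSqθ₀ := by linarith [sinSqθ₀_le_one_third]
  let v : R3 := toR3 (r * √(1 - sinSqθ₀)) 0 (r * √sinSqθ₀)
  have hv_norm : ‖v‖ = r := by
    rw [← sq_eq_sq₀ (norm_nonneg v) hr, norm_sq_eq_sum_three]
    simp only [v, toR3_apply_zero, toR3_apply_one, toR3_apply_two, mul_pow, Real.sq_sqrt hσ,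
      Real.sq_sqrt sinSqθ₀_nonneg]
    ring
  have hv_height : ((y + v) 2 - y 2) ^ 2 = r ^ 2 * sinSqθ₀ := by
    rw [PiLp.add_apply, add_sub_cancel_left, toR3_apply_two, mul_pow, Real.sq_sqrt sinSqθ₀_nonneg]
  have hlt := (hcone ⟨abs_le_of_sq_le_sq (hv_height.trans_le hle) hδ, by simp [hv_norm]⟩).2
  rw [hv_height, dist_self_add_left, hv_norm] at hlt
  exact lt_irrefl _ hlt

theorem twelve_mul_lt_of_slab_diff_ball_subset_Ncone {y : R3} {δ h : ℝ} (hδ : 0 ≤ δ) (hh : 0 ≤ h)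
    (hcone : {x : R3 | |x 2 - y 2| ≤ δ} \ ball y (h / 8) ⊆ Ncone y) : 12 * δ < h := by
  have hsq : (12 * δ) ^ 2 < h ^ 2 := calc
    (12 * δ) ^ 2 = 144 * δ ^ 2 := by ring
    _ < 144 * ((h / 8) ^ 2 * sinSqθ₀) := by
      gcongr
      exact sq_lt_of_slab_diff_ball_subset_Ncone hδ (by positivity) hcone
    _ ≤ 144 * ((h / 8) ^ 2 * (1 / 3)) := by gcongr; exact sinSqθ₀_le_one_third
    _ ≤ h ^ 2 := by linarith [sq_nonneg h]
  exact lt_of_pow_lt_pow_left₀ 2 hh hsq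

end CriticalCone

theorem exists_curve_of_joinedIn {X : Type*} [TopologicalSpace X] {A : Set X} {x y : X}
    (hxy : JoinedIn A x y) : ∃ c : ℝ → X, ContinuousOn c (Icc 0 1) ∧ c 0 = x ∧ c 1 = y ∧
      c '' Icc 0 1 ⊆ A :=
  ⟨hxy.somePath.extend, hxy.somePath.continuous_extend.continuousOn, hxy.somePath.extend_zero,
    hxy.somePath.extend_one, image_subset_iff.2 fun t ht => by
      rw [mem_preimage, Path.extend_apply _ ht]
      exact hxy.somePath_mem _⟩

theorem segment_apply_eq_zero {ι : Type*} {p q : EuclideanSpace ℝ ι} {i : ι} (hp : p i = 0)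
    (hq : q i = 0) : ∀ y ∈ segment ℝ p q, y i = 0 := by
  rintro _ ⟨a, b, -, -, -, rfl⟩
  simp [hp, hq]

theorem stmt15_general (S bd : Set R3) (hclosed : IsClosed S) (hmin : IsMinimalSurface S bd)
    (h δ : ℝ) (hδ : 12 * δ < h) (hslab : S ⊆ {x : R3 | |x 2| ≤ δ})
    (K : Set R3) (hK : IsPreconnected K) (hK3 : ∀ y ∈ K, y 2 = 0) (htube : Tub h K ∩ bd = ∅)
    (p q : R3) (hp : p ∈ K) (hq : q ∈ K) (yp : R3) (hyp : yp ∈ ball p (h / 4) ∩ S) :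
    ∃ c : ℝ → R3, ContinuousOn c (Icc 0 1) ∧ c 0 = yp ∧
      c 1 ∈ ball q (h / 4) ∩ S ∧ c '' Icc 0 1 ⊆ Tub h K ∩ S := by
  obtain ⟨hyp_near, hypS⟩ := hyp
  rw [mem_ball] at hyp_near
  have hδ0 : 0 ≤ δ := (abs_nonneg _).trans (hslab hypS)
  have hballs : ∀ y ∈ K, ball y h ⊆ Tub h K := fun y hy x hx =>
    mem_thickening_iff.2 ⟨y, hy, hx⟩
  have hypT : yp ∈ Tub h K := hballs p hp (hyp_near.trans (by linarith))
  obtain ⟨x, hx, hxq⟩ := hmin.exists_joinedIn_dist_le_of_isPreconnected (R := 7 * h / 8) hclosed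
    isOpen_thickening (disjoint_iff_inter_eq_empty.2 htube) hK
    (fun y hy x hx => by simpa [hK3 y hy] using hslab hx) (by linarith) (by nlinarith)
    (fun y hy => (closedBall_subset_ball (by linarith)).trans (hballs y hy)) hp hq
    (JoinedIn.refl ⟨hypS, hypT⟩) (by nlinarith [dist_nonneg (x := yp) (y := p)])
  obtain ⟨c, hc, hc0, rfl, hcA⟩ := exists_curve_of_joinedIn hx
  exact ⟨c, hc, hc0, ⟨hxq.trans_lt (by linarith), hx.target_mem.1⟩, hcA.trans_eq (inter_comm _ _)⟩

/-- Curve extension along a tube: for a compact embedded minimal surface in a narrow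
slab, if the `h`-tube around the horizontal segment `γ_{p,q}` misses `∂S` and `S`
meets `B_{h/4}(p)` at `y_p`, then a connected curve `ν ⊆ T_h(γ_{p,q}) ∩ S` joins `y_p`
to a point of `B_{h/4}(q) ∩ S`. -/
theorem stmt15 (S bd : Set R3) (hcpt : IsCompact S) (hmin : IsMinimalSurface S bd)
    (h βA : ℝ) (hh : 0 < h) (hβA : 0 < βA)
    (hβA1 : ∀ y : R3, {x : R3 | |x 2 - y 2| ≤ 2 * βA * h} \ ball y (h / 8) ⊆ Ncone y)
    (hβA2 : ∀ y : R3, {x : R3 | fCat y x = 3 * h / 16} ∩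
      {x : R3 | |x 2 - y 2| ≤ 2 * βA * h} ⊆ ball y (7 * h / 32))
    (hslab : S ⊆ {x : R3 | |x 2| ≤ 2 * βA * h})
    (p q : R3) (hp3 : p 2 = 0) (hq3 : q 2 = 0)
    (htube : Tub h (segment ℝ p q) ∩ bd = ∅)
    (yp : R3) (hyp : yp ∈ ball p (h / 4) ∩ S) :
    ∃ c : ℝ → R3, ContinuousOn c (Icc 0 1) ∧ c 0 = yp ∧
      c 1 ∈ ball q (h / 4) ∩ S ∧ c '' Icc 0 1 ⊆ Tub h (segment ℝ p q) ∩ S := by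
  exact stmt15_general S bd hcpt.isClosed hmin h (2 * βA * h)
    (twelve_mul_lt_of_slab_diff_ball_subset_Ncone (by positivity) hh.le (hβA1 0)) hslab
    _ (convex_segment p q).isPreconnected (segment_apply_eq_zero hp3 hq3) htube
    p q (left_mem_segment ℝ p q) (right_mem_segment ℝ p q) yp hyp

end
end
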